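/- For every real number β, the value of 3βc(2 − c) − c²(2c − 3) − 4(β − c)³ − 6(β − c)²(1 − β) at c = 3β equals β²(21 − 25β); moreover, for every β with 21/25 < β ≤ 1, there exists c with β < c < 3β such that 3βc(2 − c) − c²(2c − 3) − 4(β − c)³ − 6(β − c)²(1 − β) < 0. -/

import Mathlib

/-- Flop-slope computation of Section 6.2. -/
theorem blowup2_flop_slope :
    (∀ β : ℝ, 3 * β * (3 * β) * (2 - 3 * β) - (3 * β) ^ 2 * (2 * (3 * β) - 3)
        - 4 * (β - 3 * β) ^ 3 - 6 * (β - 3 * β) ^ 2 * (1 - β)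
        = β ^ 2 * (21 - 25 * β))
    ∧ ∀ β : ℝ, 21 / 25 < β → β ≤ 1 → ∃ c : ℝ, β < c ∧ c < 3 * β ∧
        3 * β * c * (2 - c) - c ^ 2 * (2 * c - 3) - 4 * (β - c) ^ 3
          - 6 * (β - c) ^ 2 * (1 - β) < 0 := by
  have h1 : ∀ β : ℝ, 3 * β * (3 * β) * (2 - 3 * β) - (3 * β) ^ 2 * (2 * (3 * β) - 3)
        - 4 * (β - 3 * β) ^ 3 - 6 * (β - 3 * β) ^ 2 * (1 - β)
        = β ^ 2 * (21 - 25 * β) := fun β => by ring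
  refine ⟨h1, fun β hβ _ => ?_⟩
  have hpos : 0 < β := by linarith
  have hneg : 3 * β * (3 * β) * (2 - 3 * β) - (3 * β) ^ 2 * (2 * (3 * β) - 3)
        - 4 * (β - 3 * β) ^ 3 - 6 * (β - 3 * β) ^ 2 * (1 - β) < 0 := by
    rw [h1 β]
    exact mul_neg_of_pos_of_neg (by positivity) (by linarith)
  have hc : Continuous (fun c : ℝ => 3 * β * c * (2 - c) - c ^ 2 * (2 * c - 3)
      - 4 * (β - c) ^ 3 - 6 * (β - c) ^ 2 * (1 - β)) := by fun_prop
  have hev := (hc.tendsto (3 * β)).eventually_lt_const hneg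
  have hev2 : ∀ᶠ c in nhdsWithin (3 * β) (Set.Iio (3 * β)), c ∈ Set.Ioo β (3 * β) :=
    Ioo_mem_nhdsLT (by linarith)
  obtain ⟨c, h, h'⟩ := ((hev.filter_mono nhdsWithin_le_nhds).and hev2).exists
  exact ⟨c, h'.1, h'.2, h⟩
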